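/- arXiv:2411.13465 — 3 statements merged into one kernel-verified Lean document; each statement's English description precedes it below -/
import Mathlib

section
/- Let d ≥ 2 and let p be a symmetric probability mass function on ℤ with σ² := Σ_{j∈ℤ} j² p(j) < ∞. Then for every r ≥ 1 the spherical average H_r of the free height field with increment law p on the rooted Cayley tree of order d satisfies E[H_r²] = σ² · ( ((d−1)/(d+1)) · Σ_{n=1}^{r−1} n d^{−n} + (d/(d+1)) · r d^{−r} ); in particular E[H_r²] ≤ (d/(d²−1)) σ² for every r ≥ 1. -/
open MeasureTheory ProbabilityTheory Filter Finset Topology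

noncomputable section

/-- A non-root vertex of the rooted Cayley tree of order `d`: the first step from the
root is one of `d+1` children, every further step one of `d` children. -/
abbrev Vertex (d : ℕ) : Type := Fin (d + 1) × List (Fin d)

/-- depth of a non-root vertex -/
def vdepth {d : ℕ} (v : Vertex d) : ℕ := v.2.length + 1

/-- the sphere `W_r` of radius `r ≥ 1`: all vertices of depth `r` -/
def sphereW (d r : ℕ) : Finset (Vertex d) :=
  (Finset.univ : Finset (Fin (d + 1) × (Fin (r - 1) → Fin d))).image
    (fun x => (x.1, List.ofFn x.2))

/-- height at `v`: sum of the increments along the path from the root to `v`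
(the prefixes of length `0,…,|v.2|` of the step list of `v` enumerate that path). -/
def heightAt {d : ℕ} {Ω : Type*} (Y : Vertex d → Ω → ℝ) (v : Vertex d) (ω : Ω) : ℝ :=
  ∑ k ∈ Finset.range (v.2.length + 1), Y (v.1, v.2.take k) ω

/-- spherical average `H_r` of the heights at depth `r` -/
def sphAvg (d : ℕ) {Ω : Type*} (Y : Vertex d → Ω → ℝ) (r : ℕ) (ω : Ω) : ℝ :=
  (((d + 1) * d ^ (r - 1) : ℕ) : ℝ)⁻¹ * ∑ v ∈ sphereW d r, heightAt Y v ω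

/-- A sum over the sphere of radius `m + 1`, in coordinates. -/
theorem sum_sphereW_succ {d : ℕ} (m : ℕ) (F : Vertex d → ℝ) :
    ∑ v ∈ sphereW d (m + 1), F v =
      ∑ a : Fin (d + 1), ∑ f : Fin m → Fin d, F (a, List.ofFn f) := by
  rw [sphereW, Finset.sum_image, Fintype.sum_prod_type]
  · rfl
  · rintro ⟨a, f⟩ - ⟨b, g⟩ - h
    simp only [Prod.mk.injEq, List.ofFn_inj] at h
    exact Prod.ext h.1 h.2

/-- The next sphere consists of the children of the previous one. -/
theorem sum_sphereW_add_two {d : ℕ} (m : ℕ) (F : Vertex d → ℝ) :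
    ∑ v ∈ sphereW d (m + 2), F v =
      ∑ v ∈ sphereW d (m + 1), ∑ x : Fin d, F (v.1, v.2 ++ [x]) := by
  rw [sum_sphereW_succ, sum_sphereW_succ]
  refine Finset.sum_congr rfl fun a _ => ?_
  rw [← (Fin.snocEquiv fun _ => Fin d).sum_comp, Fintype.sum_prod_type_right]
  simp only [Fin.snocEquiv_apply, List.ofFn_succ', List.concat_eq_append, Fin.snoc_castSucc,
    Fin.snoc_last]

theorem length_of_mem_sphereW {d m : ℕ} {v : Vertex d} (hv : v ∈ sphereW d (m + 1)) :
    v.2.length = m := by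
  simp only [sphereW, Finset.mem_image] at hv
  obtain ⟨x, -, rfl⟩ := hv
  simp

theorem card_sphereW_succ (d m : ℕ) :
    ((sphereW d (m + 1)).card : ℝ) = ((d : ℝ) + 1) * (d : ℝ) ^ m := by
  have h := sum_sphereW_succ (d := d) m fun _ => (1 : ℝ)
  simpa using h

theorem heightAt_append_singleton {d : ℕ} {Ω : Type*} (Y : Vertex d → Ω → ℝ)
    (v : Vertex d) (x : Fin d) (ω : Ω) :
    heightAt Y (v.1, v.2 ++ [x]) ω = heightAt Y v ω + Y (v.1, v.2 ++ [x]) ω := by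
  simp only [heightAt, List.length_append, List.length_singleton]
  rw [Finset.sum_range_succ]
  congr 1
  · refine Finset.sum_congr rfl fun k hk => ?_
    rw [List.take_append_of_le_length (Nat.lt_succ_iff.mp (Finset.mem_range.mp hk))]
  · rw [List.take_of_length_le (by simp)]

/-- The non-root vertices of depth at most `r`. -/
def ballW (d r : ℕ) : Finset (Vertex d) :=
  (Finset.range r).biUnion fun m => sphereW d (m + 1)

theorem sum_ballW {d : ℕ} (r : ℕ) (F : Vertex d → ℝ) :
    ∑ v ∈ ballW d r, F v = ∑ m ∈ Finset.range r, ∑ v ∈ sphereW d (m + 1), F v := by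
  refine Finset.sum_biUnion fun m _ n _ hmn => Finset.disjoint_left.mpr fun v hv hw => hmn ?_
  rw [← length_of_mem_sphereW hv, length_of_mem_sphereW hw]

/-- The inverse of the size of the sphere containing `v`. -/
def sphereWeight {d : ℕ} (v : Vertex d) : ℝ := (((d : ℝ) + 1) * (d : ℝ) ^ v.2.length)⁻¹

/-- The spherical average as a linear combination of the increments. -/
theorem sphAvg_succ_eq_sum_ballW {d : ℕ} (hd : d ≠ 0) {Ω : Type*} (Y : Vertex d → Ω → ℝ)
    (m : ℕ) (ω : Ω) :
    sphAvg d Y (m + 1) ω = ∑ v ∈ ballW d (m + 1), sphereWeight v * Y v ω := by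
  have hd' : (d : ℝ) ≠ 0 := Nat.cast_ne_zero.mpr hd
  have hd1 : (d : ℝ) + 1 ≠ 0 := by positivity
  induction m with
  | zero =>
    rw [sum_ballW]
    simp [sphAvg, sum_sphereW_succ, heightAt, sphereWeight, Finset.mul_sum]
  | succ m ih =>
    rw [sum_ballW, Finset.sum_range_succ, ← sum_ballW, ← ih]
    have hw : ∑ v ∈ sphereW d (m + 1 + 1), sphereWeight v * Y v ω =
        (((d : ℝ) + 1) * (d : ℝ) ^ (m + 1))⁻¹ * ∑ v ∈ sphereW d (m + 1 + 1), Y v ω := by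
      rw [Finset.mul_sum]
      refine Finset.sum_congr rfl fun v hv => ?_
      rw [sphereWeight, length_of_mem_sphereW hv]
    have hh : ∑ v ∈ sphereW d (m + 1 + 1), heightAt Y v ω =
        d * ∑ v ∈ sphereW d (m + 1), heightAt Y v ω + ∑ v ∈ sphereW d (m + 1 + 1), Y v ω := by
      rw [sum_sphereW_add_two, sum_sphereW_add_two, Finset.mul_sum, ← Finset.sum_add_distrib]
      simp [heightAt_append_singleton, Finset.sum_add_distrib]
    rw [hw, sphAvg, sphAvg, hh]
    push_cast [Nat.add_sub_cancel]
    field_simp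
    ring

theorem sum_ballW_sphereWeight_sq {d : ℕ} (hd : d ≠ 0) (r : ℕ) :
    ∑ v ∈ ballW d r, sphereWeight v ^ 2 =
      ((d : ℝ) + 1)⁻¹ * ∑ m ∈ Finset.range r, ((d : ℝ)⁻¹) ^ m := by
  have hd' : (d : ℝ) ≠ 0 := Nat.cast_ne_zero.mpr hd
  have hd1 : (d : ℝ) + 1 ≠ 0 := by positivity
  rw [sum_ballW, Finset.mul_sum]
  refine Finset.sum_congr rfl fun m _ => ?_
  have hw : ∀ v ∈ sphereW d (m + 1),
      sphereWeight v ^ 2 = ((((d : ℝ) + 1) * (d : ℝ) ^ m)⁻¹) ^ 2 := fun v hv => by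
    rw [sphereWeight, length_of_mem_sphereW hv]
  rw [Finset.sum_congr rfl hw, Finset.sum_const, nsmul_eq_mul, card_sphereW_succ, inv_pow _ m]
  field_simp

theorem inv_succ_mul_geom_sum_eq {d : ℕ} (hd : d ≠ 0) (m : ℕ) :
    ((d : ℝ) + 1)⁻¹ * ∑ k ∈ Finset.range (m + 1), ((d : ℝ)⁻¹) ^ k =
      ((d : ℝ) - 1) / ((d : ℝ) + 1) * ∑ n ∈ Finset.Icc 1 m, (n : ℝ) / (d : ℝ) ^ n
        + (d : ℝ) / ((d : ℝ) + 1) * (((m + 1 : ℕ) : ℝ) / (d : ℝ) ^ (m + 1)) := by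
  have hd' : (d : ℝ) ≠ 0 := Nat.cast_ne_zero.mpr hd
  have hd1 : (d : ℝ) + 1 ≠ 0 := by positivity
  induction m with
  | zero => simp; field_simp
  | succ m ih =>
    rw [Finset.sum_range_succ, mul_add, ih, Finset.sum_Icc_succ_top (by omega), inv_pow]
    push_cast
    field_simp
    ring

theorem inv_succ_mul_geom_sum_le {d : ℕ} (hd : 2 ≤ d) (r : ℕ) :
    ((d : ℝ) + 1)⁻¹ * ∑ k ∈ Finset.range r, ((d : ℝ)⁻¹) ^ k ≤ (d : ℝ) / ((d : ℝ) ^ 2 - 1) := by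
  have hd' : (2 : ℝ) ≤ d := by exact_mod_cast hd
  have hlt : (d : ℝ)⁻¹ < 1 := inv_lt_one_of_one_lt₀ (by linarith)
  have hgeom : ∑ k ∈ Finset.range r, ((d : ℝ)⁻¹) ^ k ≤ (1 - (d : ℝ)⁻¹)⁻¹ := by
    rw [← tsum_geometric_of_lt_one (by positivity) hlt]
    exact (summable_geometric_of_lt_one (by positivity) hlt).sum_le_tsum _
      fun _ _ => by positivity
  refine (mul_le_mul_of_nonneg_left hgeom (by positivity)).trans_eq ?_
  have h1 : (d : ℝ) - 1 ≠ 0 := by linarith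
  have h2 : (d : ℝ) ^ 2 - 1 ≠ 0 := by nlinarith
  have h3 : (d : ℝ) + 1 ≠ 0 := by linarith
  have h4 : (d : ℝ) ≠ 0 := by linarith
  field_simp
  ring

section Law

variable {Ω : Type*} [MeasurableSpace Ω] {P : Measure Ω} {X : Ω → ℤ} {p : ℤ → ℝ}

theorem integrable_comp_of_summable (hX : Measurable X)
    (hlaw : ∀ j, P {ω | X ω = j} = ENNReal.ofReal (p j)) {g : ℤ → ℝ}
    (hg : Summable fun j => |g j| * p j) : Integrable (fun ω => g (X ω)) P := by
  have hmap : ∀ j, P.map X {j} = ENNReal.ofReal (p j) := fun j => by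
    rw [Measure.map_apply hX (measurableSet_singleton j)]
    exact hlaw j
  suffices h : Integrable g (P.map X) from h.comp_measurable hX
  refine ⟨(measurable_of_countable g).aestronglyMeasurable, ?_⟩
  rw [hasFiniteIntegral_iff_norm, lintegral_countable']
  simp only [hmap, Real.norm_eq_abs, ← ENNReal.ofReal_mul (abs_nonneg _)]
  exact hg.tsum_ofReal_lt_top

theorem integral_comp_eq_tsum (hX : Measurable X) (hp0 : ∀ j, 0 ≤ p j)
    (hlaw : ∀ j, P {ω | X ω = j} = ENNReal.ofReal (p j)) {g : ℤ → ℝ}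
    (hg : Summable fun j => |g j| * p j) : ∫ ω, g (X ω) ∂P = ∑' j, g j * p j := by
  have hgm : Measurable g := measurable_of_countable g
  have hint : Integrable g (P.map X) :=
    (integrable_map_measure hgm.aestronglyMeasurable hX.aemeasurable).mpr
      (integrable_comp_of_summable hX hlaw hg)
  rw [← integral_map hX.aemeasurable hgm.aestronglyMeasurable, integral_countable hint]
  refine tsum_congr fun j => ?_
  rw [measureReal_def, Measure.map_apply hX (measurableSet_singleton j), smul_eq_mul, mul_comm]
  change _ * (P {ω | X ω = j}).toReal = _
  rw [hlaw, ENNReal.toReal_ofReal (hp0 j)]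

theorem summable_abs_mul_of_summable_sq_mul (hp0 : ∀ j, 0 ≤ p j)
    (hmom : Summable fun j : ℤ => (j : ℝ) ^ 2 * p j) :
    Summable fun j : ℤ => |(j : ℝ)| * p j := by
  refine hmom.of_nonneg_of_le (fun j => mul_nonneg (abs_nonneg _) (hp0 j)) fun j => ?_
  refine mul_le_mul_of_nonneg_right ?_ (hp0 j)
  rw [← sq_abs]
  exact_mod_cast Int.le_self_sq |j|

theorem integral_eq_zero_of_symmetric_law (hX : Measurable X) (hp0 : ∀ j, 0 ≤ p j)
    (hlaw : ∀ j, P {ω | X ω = j} = ENNReal.ofReal (p j)) (hsymm : ∀ j, p (-j) = p j)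
    (hmom : Summable fun j : ℤ => (j : ℝ) ^ 2 * p j) : ∫ ω, (X ω : ℝ) ∂P = 0 := by
  rw [integral_comp_eq_tsum hX hp0 hlaw (g := fun j => (j : ℝ))
    (summable_abs_mul_of_summable_sq_mul hp0 hmom)]
  have h := (Equiv.neg ℤ).tsum_eq fun j : ℤ => (j : ℝ) * p j
  simp only [Equiv.neg_apply, hsymm, Int.cast_neg, neg_mul, tsum_neg] at h
  linarith

theorem integral_sq_eq_tsum (hX : Measurable X) (hp0 : ∀ j, 0 ≤ p j)
    (hlaw : ∀ j, P {ω | X ω = j} = ENNReal.ofReal (p j))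
    (hmom : Summable fun j : ℤ => (j : ℝ) ^ 2 * p j) :
    ∫ ω, (X ω : ℝ) ^ 2 ∂P = ∑' j : ℤ, (j : ℝ) ^ 2 * p j :=
  integral_comp_eq_tsum hX hp0 hlaw (g := fun j => (j : ℝ) ^ 2) (by simpa using hmom)

theorem memLp_two_of_summable_sq_mul (hX : Measurable X)
    (hlaw : ∀ j, P {ω | X ω = j} = ENNReal.ofReal (p j))
    (hmom : Summable fun j : ℤ => (j : ℝ) ^ 2 * p j) :
    MemLp (fun ω => (X ω : ℝ)) 2 P :=
  (memLp_two_iff_integrable_sq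
    ((measurable_of_countable fun j : ℤ => (j : ℝ)).comp hX).aestronglyMeasurable).mpr
    (integrable_comp_of_summable hX hlaw (g := fun j => (j : ℝ) ^ 2) (by simpa using hmom))

end Law

/-- Second moment of a linear combination of independent centred variables with common
second moment. -/
theorem integral_sq_sum_mul_of_iIndepFun {Ω ι : Type*} [MeasurableSpace Ω] {P : Measure Ω}
    [IsProbabilityMeasure P] {X : ι → Ω → ℝ} (hX : iIndepFun X P) (hL2 : ∀ i, MemLp (X i) 2 P)
    (hmean : ∀ i, ∫ ω, X i ω ∂P = 0) {σsq : ℝ} (hvar : ∀ i, ∫ ω, X i ω ^ 2 ∂P = σsq)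
    (s : Finset ι) (c : ι → ℝ) :
    ∫ ω, (∑ i ∈ s, c i * X i ω) ^ 2 ∂P = σsq * ∑ i ∈ s, c i ^ 2 := by
  have hcL2 : ∀ i, MemLp (fun ω => c i * X i ω) 2 P := fun i => (hL2 i).const_mul (c i)
  have hsumL2 : MemLp (fun ω => ∑ i ∈ s, c i * X i ω) 2 P := memLp_finsetSum s fun i _ => hcL2 i
  have hmean' : ∫ ω, ∑ i ∈ s, c i * X i ω ∂P = 0 := by
    rw [integral_finsetSum s fun i _ => (hcL2 i).integrable one_le_two]
    simp [integral_const_mul, hmean]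
  have hindep : iIndepFun (fun i ω => c i * X i ω) P :=
    hX.comp (fun i x => c i * x) fun i => measurable_const_mul (c i)
  rw [← variance_of_integral_eq_zero hsumL2.aestronglyMeasurable.aemeasurable hmean']
  have h := IndepFun.variance_sum (s := s) (fun i _ => hcL2 i)
    fun i _ j _ hij => hindep.indepFun hij
  have hfun : (∑ i ∈ s, fun ω => c i * X i ω) = fun ω => ∑ i ∈ s, c i * X i ω := by
    ext ω
    simp
  rw [← hfun, h, Finset.mul_sum]
  refine Finset.sum_congr rfl fun i _ => ?_
  rw [variance_const_mul, variance_of_integral_eq_zero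
    (hL2 i).aestronglyMeasurable.aemeasurable (hmean i), hvar, mul_comm]

/-- Exact second moment of the spherical average `H_r` of the free height
field, and the uniform bound `E[H_r²] ≤ d σ²/(d²-1)`. -/
theorem free_spherical_average_second_moment
    {Ω : Type} [MeasurableSpace Ω] (P : Measure Ω) [IsProbabilityMeasure P]
    (d : ℕ) (hd : 2 ≤ d)
    (p : ℤ → ℝ) (hp0 : ∀ j, 0 ≤ p j) (hpsum : Summable p) (hp1 : ∑' j, p j = 1)
    (hsymm : ∀ j, p (-j) = p j)
    (hmom : Summable (fun j : ℤ => (j : ℝ) ^ 2 * p j))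
    (Y : Vertex d → Ω → ℤ) (hmeas : ∀ v, Measurable (Y v))
    (hindep : iIndepFun Y P)
    (hlaw : ∀ v (j : ℤ), P {ω | Y v ω = j} = ENNReal.ofReal (p j)) :
    ∀ r : ℕ, 1 ≤ r →
      (∫ ω, (sphAvg d (fun v ω => (Y v ω : ℝ)) r ω) ^ 2 ∂P =
        (∑' j : ℤ, (j : ℝ) ^ 2 * p j) *
          (((d : ℝ) - 1) / ((d : ℝ) + 1) * ∑ n ∈ Finset.Icc 1 (r - 1), (n : ℝ) / (d : ℝ) ^ n
            + (d : ℝ) / ((d : ℝ) + 1) * ((r : ℝ) / (d : ℝ) ^ r))) ∧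
      ∫ ω, (sphAvg d (fun v ω => (Y v ω : ℝ)) r ω) ^ 2 ∂P ≤
        (d : ℝ) / ((d : ℝ) ^ 2 - 1) * ∑' j : ℤ, (j : ℝ) ^ 2 * p j := by
  intro r hr
  obtain ⟨m, rfl⟩ := Nat.exists_eq_succ_of_ne_zero (Nat.one_le_iff_ne_zero.mp hr)
  have hd0 : d ≠ 0 := by omega
  have hindep' : iIndepFun (fun v ω => (Y v ω : ℝ)) P :=
    hindep.comp (fun _ (j : ℤ) => (j : ℝ)) fun _ => measurable_of_countable _
  have hmoment : ∫ ω, (sphAvg d (fun v ω => (Y v ω : ℝ)) (m + 1) ω) ^ 2 ∂P =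
      (∑' j : ℤ, (j : ℝ) ^ 2 * p j) *
        (((d : ℝ) + 1)⁻¹ * ∑ k ∈ Finset.range (m + 1), ((d : ℝ)⁻¹) ^ k) := by
    simp only [sphAvg_succ_eq_sum_ballW hd0]
    rw [integral_sq_sum_mul_of_iIndepFun hindep'
      (fun v => memLp_two_of_summable_sq_mul (hmeas v) (hlaw v) hmom)
      (fun v => integral_eq_zero_of_symmetric_law (hmeas v) hp0 (hlaw v) hsymm hmom)
      (fun v => integral_sq_eq_tsum (hmeas v) hp0 (hlaw v) hmom), sum_ballW_sphereWeight_sq hd0]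
  refine ⟨?_, ?_⟩
  · rw [Nat.succ_eq_add_one, hmoment, inv_succ_mul_geom_sum_eq hd0, Nat.add_sub_cancel]
  · rw [Nat.succ_eq_add_one, hmoment, mul_comm]
    exact mul_le_mul_of_nonneg_right (inv_succ_mul_geom_sum_le hd _)
      (tsum_nonneg fun j => mul_nonneg (sq_nonneg _) (hp0 j))
end
end

section
/- Let d ≥ 2 and let p be a symmetric probability mass function on ℤ with 0 < Σ_{j∈ℤ} j² p(j) < ∞. Let H be the almost-sure limit of the spherical averages H_r of the free height field with increment law p on the rooted Cayley tree of order d. Then the law of H is absolutely continuous with respect to Lebesgue measure on ℝ and admits a bounded, infinitely differentiable (C^∞) density f_H, given by Fourier inversion: f_H(x) = (2π)^{−1} ∫_ℝ e^{−itx} E[exp(itH)] dt. -/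
open MeasureTheory ProbabilityTheory Filter Finset Topology

noncomputable section

section FourierInversion

open scoped FourierTransform SchwartzMap ContDiff

/-- The Fourier-inversion candidate for the density of a measure on `ℝ`. -/
def invDensity (μ : Measure ℝ) : ℝ → ℂ := 𝓕⁻ (fun s : ℝ => charFun μ (-(2 * Real.pi * s)))

lemma integrable_charFun_comp {μ : Measure ℝ} (hφ : Integrable (charFun μ)) :
    Integrable (fun s : ℝ => charFun μ (-(2 * Real.pi * s))) := by
  have h : -(2 * Real.pi) ≠ 0 := by simp [Real.pi_ne_zero]
  simpa [neg_mul] using hφ.comp_mul_left' h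

lemma charFun_neg_two_pi_mul (μ : Measure ℝ) (s : ℝ) :
    charFun μ (-(2 * Real.pi * s)) =
      VectorFourier.fourierIntegral Real.fourierChar μ (innerₗ ℝ) 1 s := by
  rw [charFun_eq_fourierIntegral']
  congr 1
  have := Real.pi_ne_zero
  simp
  field_simp

lemma integral_schwartz_eq (μ : Measure ℝ) [IsFiniteMeasure μ] (hφ : Integrable (charFun μ))
    (ψ : 𝓢(ℝ, ℂ)) : ∫ x, ψ x ∂μ = ∫ x, ψ x * invDensity μ x := by
  have hG := integrable_charFun_comp hφ
  have hη : Integrable (𝓕⁻ ψ : 𝓢(ℝ, ℂ)) := SchwartzMap.integrable _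
  have hψ : 𝓕 (𝓕⁻ ψ : 𝓢(ℝ, ℂ)) = ψ := FourierTransform.fourier_fourierInv_eq ψ
  have e1 := VectorFourier.integral_fourierIntegral_smul_eq_flip (L := innerₗ ℝ) (μ := μ)
    (ν := volume) (f := 1) Real.continuous_fourierChar continuous_inner
    (integrable_const (1 : ℂ)) hη
  have e2 := VectorFourier.integral_fourierIntegral_smul_eq_flip (L := -innerₗ ℝ) (μ := volume)
    (ν := volume) (f := ψ) Real.continuous_fourierChar
    (by simpa using! continuous_inner.neg) ψ.integrable hG
  have e3 : ∀ x, ψ x = VectorFourier.fourierIntegral Real.fourierChar volume (innerₗ ℝ).flip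
      (⇑(𝓕⁻ ψ : 𝓢(ℝ, ℂ))) x := by
    intro x
    conv_lhs => rw [← hψ]
    rw [SchwartzMap.fourier_coe]
    simp [Real.fourier_eq, VectorFourier.fourierIntegral]
  have e4 : ∀ x, invDensity μ x = VectorFourier.fourierIntegral Real.fourierChar volume
      (-innerₗ ℝ).flip (fun s : ℝ => charFun μ (-(2 * Real.pi * s))) x := by
    intro x
    simp [invDensity, Real.fourierInv_eq, VectorFourier.fourierIntegral, mul_comm]
  have e5 : ∀ s, (𝓕⁻ ψ : 𝓢(ℝ, ℂ)) s =
      VectorFourier.fourierIntegral Real.fourierChar volume (-innerₗ ℝ) ψ s := by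
    intro s
    rw [SchwartzMap.fourierInv_coe]
    rfl
  simp only [smul_eq_mul, ← e4, ← e5, ← charFun_neg_two_pi_mul, ← e3, Pi.one_apply, one_mul]
    at e1 e2
  rw [← e1, ← e2]
  simp only [mul_comm]

lemma invDensity_eq (μ : Measure ℝ) (x : ℝ) :
    invDensity μ x = (((2 * Real.pi)⁻¹ : ℝ) : ℂ) *
      ∫ t : ℝ, Complex.exp (-(Complex.I * t * x)) * charFun μ t := by
  have := Measure.integral_comp_mul_left (fun t : ℝ => Complex.exp (-(Complex.I * t * x)) * charFun μ t)
    (-(2 * Real.pi))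
  have hp := Real.pi_pos
  rw [invDensity, Real.fourierInv_eq']
  rw [abs_inv, abs_neg, abs_of_pos (by positivity)] at this
  rw [← Complex.real_smul, ← this]
  refine integral_congr_ae (ae_of_all _ fun s => ?_)
  simp only [smul_eq_mul]
  congr 2
  · simp; ring
  · ring

lemma conj_invDensity (μ : Measure ℝ) (x : ℝ) :
    (starRingEnd ℂ) (invDensity μ x) = invDensity μ x := by
  rw [invDensity_eq, map_mul, Complex.conj_ofReal, ← integral_conj,
    ← integral_neg_eq_self]
  congr 1
  refine integral_congr_ae (ae_of_all _ fun s => ?_)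
  simp [← Complex.exp_conj]

lemma ofReal_re_invDensity (μ : Measure ℝ) (x : ℝ) :
    ((invDensity μ x).re : ℂ) = invDensity μ x :=
  Complex.conj_eq_iff_re.1 (conj_invDensity μ x)

lemma norm_invDensity_le (μ : Measure ℝ) (x : ℝ) :
    ‖invDensity μ x‖ ≤ ∫ s, ‖charFun μ (-(2 * Real.pi * s))‖ :=
  VectorFourier.norm_fourierIntegral_le_integral_norm _ _ _ _ _

lemma contDiff_invDensity {μ : Measure ℝ}
    (h : ∀ n : ℕ, Integrable (fun t : ℝ => |t| ^ n * ‖charFun μ t‖)) :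
    ContDiff ℝ ∞ (invDensity μ) := by
  rw [invDensity, Real.fourierInv_eq_fourier_comp_neg]
  refine Real.contDiff_fourier fun n _ => ?_
  have h2 : (2 * Real.pi) ≠ 0 := by simp [Real.pi_ne_zero]
  refine (((h n).comp_mul_left' h2).const_mul (|2 * Real.pi| ^ n)⁻¹).congr (ae_of_all _ fun s => ?_)
  have : |2 * Real.pi| ^ n ≠ 0 := by positivity
  simp only [abs_mul (2 * Real.pi), mul_pow, Real.norm_eq_abs]
  rw [mul_assoc, inv_mul_cancel_left₀ this]
  simp

/-- Measures of bounded open intervals are integrals of the Fourier-inversion density. -/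
lemma measureReal_Ioo_eq {μ : Measure ℝ} [IsFiniteMeasure μ]
    (h : ∀ n : ℕ, Integrable (fun t : ℝ => |t| ^ n * ‖charFun μ t‖)) (hφ : Integrable (charFun μ))
    (a b : ℝ) : μ.real (Set.Ioo a b) = ∫ x in Set.Ioo a b, (invDensity μ x).re := by
  obtain ⟨u, hus, hud, hur⟩ :=
    (isOpen_Ioo (a := a) (b := b)).exists_contDiff_support_eq (E := ℝ) (n := ⊤)
  have hu0 : ∀ x, 0 ≤ u x := fun x => (hur ⟨x, rfl⟩).1
  have hcont := (contDiff_invDensity h).continuous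
  set ψ : ℕ → ℝ → ℝ := fun n x => Real.smoothTransition (n * u x) with hψ
  have hψd : ∀ n, ContDiff ℝ ∞ (ψ n) := fun n =>
    Real.smoothTransition.contDiff.comp (contDiff_const.mul hud)
  have hψout : ∀ n x, x ∉ Set.Ioo a b → ψ n x = 0 := by
    intro n x hx
    have : u x = 0 := by rw [← hus] at hx; simpa using hx
    simp [hψ, this]
  have hψc : ∀ n, HasCompactSupport (ψ n) := fun n =>
    HasCompactSupport.intro (isCompact_Icc (a := a) (b := b))
      fun x hx => hψout n x fun hx' => hx (Set.Ioo_subset_Icc_self hx')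
  have hlim : ∀ x, Tendsto (fun n => ψ n x) atTop (𝓝 ((Set.Ioo a b).indicator 1 x)) := by
    intro x
    by_cases hx : x ∈ Set.Ioo a b
    · have hpos : 0 < u x := lt_of_le_of_ne (hu0 x) (by rw [← hus] at hx; exact fun h => hx h.symm)
      have : ∀ᶠ n : ℕ in atTop, 1 ≤ (n : ℝ) * u x :=
        (tendsto_natCast_atTop_atTop.atTop_mul_const hpos).eventually_ge_atTop 1
      simp only [Set.indicator_of_mem hx, Pi.one_apply]
      refine tendsto_const_nhds.congr' ?_
      filter_upwards [this] with n hn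
      exact (Real.smoothTransition.one_of_one_le hn).symm
    · simp [hψout _ _ hx, Set.indicator_of_notMem hx]
  have hkey : ∀ n, ∫ x, ψ n x ∂μ = ∫ x, ψ n x * (invDensity μ x).re := by
    intro n
    have hg₁ : HasCompactSupport (Complex.ofRealCLM ∘ ψ n) := (hψc n).comp_left rfl
    have hg₂ : ContDiff ℝ ∞ (Complex.ofRealCLM ∘ ψ n) := by
      exact Complex.ofRealCLM.contDiff.comp (hψd n)
    have := integral_schwartz_eq μ hφ (hg₁.toSchwartzMap hg₂)
    apply Complex.ofReal_injective
    rw [← integral_complex_ofReal, ← integral_complex_ofReal]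
    simpa [ofReal_re_invDensity] using this
  have L1 : Tendsto (fun n => ∫ x, ψ n x ∂μ) atTop (𝓝 (μ.real (Set.Ioo a b))) := by
    rw [← integral_indicator_one measurableSet_Ioo]
    refine tendsto_integral_of_dominated_convergence (fun _ => (1 : ℝ))
      (fun n => (hψd n).continuous.aestronglyMeasurable) (integrable_const _) ?_ (ae_of_all _ hlim)
    intro n
    refine ae_of_all _ fun x => ?_
    rw [Real.norm_of_nonneg (Real.smoothTransition.nonneg _)]
    exact Real.smoothTransition.le_one _
  have L2 : Tendsto (fun n => ∫ x, ψ n x * (invDensity μ x).re) atTop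
      (𝓝 (∫ x in Set.Ioo a b, (invDensity μ x).re)) := by
    rw [← integral_indicator measurableSet_Ioo]
    refine tendsto_integral_of_dominated_convergence
      ((Set.Ioo a b).indicator fun x => |(invDensity μ x).re|)
      (fun n => ((hψd n).continuous.mul (Complex.continuous_re.comp hcont)).aestronglyMeasurable)
      ?_ ?_ (ae_of_all _ fun x => ?_)
    · rw [integrable_indicator_iff measurableSet_Ioo]
      exact ((Complex.continuous_re.comp hcont).abs.integrableOn_Icc (a := a) (b := b)).mono_set
        Set.Ioo_subset_Icc_self
    · intro n
      refine ae_of_all _ fun x => ?_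
      by_cases hx : x ∈ Set.Ioo a b
      · rw [Set.indicator_of_mem hx, norm_mul, Real.norm_eq_abs (invDensity μ x).re,
          Real.norm_of_nonneg (Real.smoothTransition.nonneg _)]
        exact mul_le_of_le_one_left (abs_nonneg _) (Real.smoothTransition.le_one _)
      · simp [hψout _ _ hx, Set.indicator_of_notMem hx]
    · have := (hlim x).mul_const (invDensity μ x).re
      convert this using 2
      by_cases hx : x ∈ Set.Ioo a b <;> simp [hx]
  simp only [hkey] at L1
  exact tendsto_nhds_unique L1 L2

lemma invDensity_re_nonneg {μ : Measure ℝ} [IsFiniteMeasure μ]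
    (h : ∀ n : ℕ, Integrable (fun t : ℝ => |t| ^ n * ‖charFun μ t‖)) (hφ : Integrable (charFun μ))
    (x : ℝ) : 0 ≤ (invDensity μ x).re := by
  by_contra! hx
  have hcont := Complex.continuous_re.comp (contDiff_invDensity h).continuous
  obtain ⟨ε, hε, hb⟩ := Metric.eventually_nhds_iff.1
    (hcont.continuousAt.eventually_lt (continuousAt_const (y := (invDensity μ x).re / 2))
      (show (Complex.re ∘ invDensity μ) x < _ by simp only [Function.comp_apply]; linarith))
  have h1 := measureReal_Ioo_eq h hφ (x - ε) (x + ε)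
  have h2 : ∫ y in Set.Ioo (x - ε) (x + ε), (invDensity μ y).re ≤
      ∫ y in Set.Ioo (x - ε) (x + ε), (invDensity μ x).re / 2 := by
    refine setIntegral_mono_on (hcont.integrableOn_Icc.mono_set Set.Ioo_subset_Icc_self)
      (by simp) measurableSet_Ioo fun y hy => (hb ?_).le
    rw [Real.dist_eq, abs_lt]
    constructor <;> linarith [hy.1, hy.2]
  rw [setIntegral_const, Real.volume_real_Ioo_of_le (by linarith), smul_eq_mul, ← h1] at h2
  have := measureReal_nonneg (μ := μ) (s := Set.Ioo (x - ε) (x + ε))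
  nlinarith

/-- Fourier inversion for measures whose characteristic function decays faster than any power. -/
theorem eq_withDensity_invDensity {μ : Measure ℝ} [IsFiniteMeasure μ]
    (h : ∀ n : ℕ, Integrable (fun t : ℝ => |t| ^ n * ‖charFun μ t‖)) (hφ : Integrable (charFun μ)) :
    μ = volume.withDensity (fun x => ENNReal.ofReal (invDensity μ x).re) := by
  refine Real.measure_ext_Ioo_rat fun a b => ?_
  have hcont : Continuous fun x => (invDensity μ x).re :=
    Complex.continuous_re.comp (contDiff_invDensity h).continuous
  rw [withDensity_apply _ measurableSet_Ioo, ← ofReal_integral_eq_lintegral_ofReal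
    (hcont.integrableOn_Icc.mono_set Set.Ioo_subset_Icc_self)
    (ae_of_all _ fun x => invDensity_re_nonneg h hφ x)]
  exact (measureReal_Ioo_eq h hφ a b) ▸ (ofReal_measureReal).symm

end FourierInversion

lemma integrable_pow_mul_norm_charFun {μ : Measure ℝ} [IsFiniteMeasure μ] {C c : ℝ} (hc : 0 < c)
    (hbd : ∀ t, ‖charFun μ t‖ ≤ C * Real.exp (-(c * |t|))) (n : ℕ) :
    Integrable (fun t : ℝ => |t| ^ n * ‖charFun μ t‖) := by
  have key : ∀ (m : ℕ) (t : ℝ), |t| ^ m * ‖charFun μ t‖ ≤ C * (m.factorial / c ^ m) := by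
    intro m t
    have h1 := Real.pow_div_factorial_le_exp (c * |t|) (by positivity) m
    rw [mul_pow, div_le_iff₀ (by positivity)] at h1
    have h2 : |t| ^ m ≤ Real.exp (c * |t|) * (m.factorial / c ^ m) := by
      rw [← mul_div_assoc, le_div_iff₀ (by positivity)]
      linarith
    calc |t| ^ m * ‖charFun μ t‖
        ≤ (Real.exp (c * |t|) * (m.factorial / c ^ m)) * (C * Real.exp (-(c * |t|))) := by
          gcongr
          exact hbd t
      _ = (Real.exp (c * |t|) * Real.exp (-(c * |t|))) * (C * (m.factorial / c ^ m)) := by ring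
      _ = _ := by rw [← Real.exp_add]; simp
  refine (integrable_inv_one_add_sq.const_mul
    (C * (n.factorial / c ^ n) + C * ((n + 2).factorial / c ^ (n + 2)))).mono'
    (((continuous_abs.pow n).measurable.mul measurable_charFun.norm).aestronglyMeasurable)
    (ae_of_all _ fun t => ?_)
  rw [Real.norm_of_nonneg (by positivity), ← div_eq_mul_inv, le_div_iff₀ (by positivity)]
  have := key n t
  have h2 := key (n + 2) t
  rw [pow_add, sq_abs] at h2
  linarith

lemma ofFn_injective_pair (d m : ℕ) : Function.Injective
    (fun x : Fin (d + 1) × (Fin m → Fin d) => ((x.1, List.ofFn x.2) : Vertex d)) := by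
  rintro ⟨a, x⟩ ⟨b, y⟩ h
  simp only [Prod.mk.injEq] at h
  simp [h.1, List.ofFn_injective h.2]

lemma sum_sphereW {M : Type*} [AddCommMonoid M] (d k : ℕ) (g : Vertex d → M) :
    ∑ v ∈ sphereW d (k + 1), g v =
      ∑ a : Fin (d + 1), ∑ y : Fin k → Fin d, g (a, List.ofFn y) := by
  refine (sum_image (ofFn_injective_pair d k).injOn).trans ?_
  exact Fintype.sum_prod_type _

lemma card_sphereW (d k : ℕ) : (sphereW d (k + 1)).card = (d + 1) * d ^ k := by
  rw [card_eq_sum_ones, sum_sphereW]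
  simp

lemma vertex_length_of_mem {d k : ℕ} {v : Vertex d} (hv : v ∈ sphereW d (k + 1)) :
    v.2.length = k := by
  obtain ⟨x, -, rfl⟩ := Finset.mem_image.1 hv
  simp

/-- Each vertex of a sphere has the same number of descendants on a larger sphere. -/
lemma sum_take_sphereW (d k l : ℕ) (g : Vertex d → ℝ) :
    ∑ v ∈ sphereW d (k + l + 1), g (v.1, v.2.take k) =
      (d : ℝ) ^ l * ∑ v ∈ sphereW d (k + 1), g v := by
  rw [sum_sphereW, sum_sphereW, mul_sum]
  refine sum_congr rfl fun a _ => ?_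
  rw [← (Fin.appendEquiv k l).sum_comp, ← univ_product_univ, sum_product, mul_sum]
  refine sum_congr rfl fun y _ => ?_
  simp [Fin.appendEquiv, List.ofFn_fin_append, List.take_left']

lemma sphAvg_eq {d : ℕ} (hd : 2 ≤ d) {Ω : Type*} (Y : Vertex d → Ω → ℝ) (m : ℕ) (ω : Ω) :
    sphAvg d Y (m + 1) ω = ∑ v ∈ (range (m + 1)).biUnion (fun k => sphereW d (k + 1)),
      (((d + 1) * d ^ v.2.length : ℕ) : ℝ)⁻¹ * Y v ω := by
  have hd0 : (d : ℝ) ≠ 0 := by positivity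
  rw [sum_biUnion]
  · rw [sphAvg, sum_congr rfl (g := fun v => ∑ k ∈ range (m + 1), Y (v.1, v.2.take k) ω)
      (fun v hv => by rw [heightAt, vertex_length_of_mem hv]), sum_comm, mul_sum]
    refine sum_congr rfl fun k hk => ?_
    obtain ⟨l, rfl⟩ := Nat.exists_eq_add_of_le (Nat.lt_succ_iff.1 (mem_range.1 hk))
    rw [sum_take_sphereW d k l (fun v => Y v ω), ← mul_assoc, mul_sum]
    refine sum_congr rfl fun v hv => ?_
    rw [vertex_length_of_mem hv]
    congr 1
    push_cast
    rw [pow_add]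
    field_simp
  · intro i _ j _ hij
    refine disjoint_left.2 fun v hv hv' => hij ?_
    rw [← vertex_length_of_mem hv, vertex_length_of_mem hv']

lemma norm_charFun_le_of_symm {Ω : Type*} [MeasurableSpace Ω] (P : Measure Ω)
    [IsProbabilityMeasure P] {p : ℤ → ℝ} (hp0 : ∀ j, 0 ≤ p j) (hpsum : Summable p)
    (hp1 : ∑' j, p j = 1) (hsymm : ∀ j, p (-j) = p j) {X : Ω → ℤ} (hX : Measurable X)
    (hlaw : ∀ j : ℤ, P {ω | X ω = j} = ENNReal.ofReal (p j)) (j₀ : ℤ) (s : ℝ) :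
    ‖charFun (P.map fun ω => (X ω : ℝ)) s‖ ≤ 1 - p j₀ * (1 - |Real.cos (s * j₀)|) := by
  have hval : charFun (P.map fun ω => (X ω : ℝ)) s =
      ∑' j : ℤ, (p j : ℂ) * Complex.exp (s * j * Complex.I) := by
    have : IsProbabilityMeasure (P.map X) := Measure.isProbabilityMeasure_map hX.aemeasurable
    have h1 : P.map (fun ω => (X ω : ℝ)) = (P.map X).map (fun j : ℤ => (j : ℝ)) :=
      (Measure.map_map (by fun_prop) hX).symm
    rw [h1, charFun_apply_real, integral_map (by fun_prop) (by fun_prop), integral_countable]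
    · refine tsum_congr fun j => ?_
      rw [measureReal_def, Measure.map_apply hX (measurableSet_singleton j),
        show X ⁻¹' {j} = {ω | X ω = j} from rfl, hlaw, ENNReal.toReal_ofReal (hp0 j)]
      simp
    · refine (integrable_const (1 : ℝ)).mono' (by fun_prop) (ae_of_all _ fun j => ?_)
      rw [← Complex.ofReal_mul, Complex.norm_exp_ofReal_mul_I]
  have hsum : Summable fun j : ℤ => (p j : ℂ) * Complex.exp (s * j * Complex.I) := by
    refine Summable.of_norm_bounded hpsum fun j => ?_
    rw [← Complex.ofReal_intCast, ← Complex.ofReal_mul, norm_mul, Complex.norm_exp_ofReal_mul_I]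
    simp [abs_of_nonneg (hp0 j)]
  have hsum' : Summable fun j : ℤ => (p j : ℂ) * Complex.exp (s * (-j : ℤ) * Complex.I) := by
    have := (Equiv.neg ℤ).summable_iff.2 hsum
    simpa [Function.comp_def, hsymm] using this
  have hneg : ∑' j : ℤ, (p j : ℂ) * Complex.exp (s * (-j : ℤ) * Complex.I) =
      ∑' j : ℤ, (p j : ℂ) * Complex.exp (s * j * Complex.I) := by
    rw [← (Equiv.neg ℤ).tsum_eq (fun j : ℤ => (p j : ℂ) * Complex.exp (s * j * Complex.I))]
    simp [hsymm]
  have hcos : charFun (P.map fun ω => (X ω : ℝ)) s =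
      ∑' j : ℤ, ((p j * Real.cos (s * j) : ℝ) : ℂ) := by
    have h2 : charFun (P.map fun ω => (X ω : ℝ)) s * 2 =
        (∑' j : ℤ, ((p j * Real.cos (s * j) : ℝ) : ℂ)) * 2 := by
      rw [mul_two, hval]
      nth_rewrite 2 [← hneg]
      rw [← hsum.tsum_add hsum', ← tsum_mul_right]
      refine tsum_congr fun j => ?_
      push_cast
      rw [Complex.cos]
      ring_nf
    exact mul_right_cancel₀ two_ne_zero h2
  have hle : ∀ j : ℤ, ‖((p j * Real.cos (s * j) : ℝ) : ℂ)‖ ≤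
      p j - if j = j₀ then p j₀ * (1 - |Real.cos (s * j₀)|) else 0 := by
    intro j
    rw [Complex.norm_real, norm_mul, Real.norm_of_nonneg (hp0 j), Real.norm_eq_abs]
    split_ifs with h
    · subst h; linarith
    · rw [sub_zero]
      exact mul_le_of_le_one_right (hp0 j) (Real.abs_cos_le_one _)
  have hs := hpsum.hasSum.sub (hasSum_ite_eq j₀ (p j₀ * (1 - |Real.cos (s * j₀)|)))
  rw [hp1] at hs
  rw [hcos]
  exact tsum_of_norm_bounded hs hle

lemma charFun_map_apply_real {Ω : Type*} [MeasurableSpace Ω] {P : Measure Ω} {X : Ω → ℝ}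
    (hX : Measurable X) (t : ℝ) :
    charFun (P.map X) t = ∫ ω, Complex.exp (t * X ω * Complex.I) ∂P := by
  rw [charFun_apply_real, integral_map hX.aemeasurable (by fun_prop)]

lemma norm_charFun_limit_le {Ω : Type*} [MeasurableSpace Ω] (P : Measure Ω)
    [IsProbabilityMeasure P] {d : ℕ} (hd : 2 ≤ d) {X : Vertex d → Ω → ℝ}
    (hX : ∀ v, Measurable (X v)) (hindep : iIndepFun X P) {H : Ω → ℝ} (hHmeas : Measurable H)
    (hH : ∀ᵐ ω ∂P, Tendsto (fun r => sphAvg d X r ω) atTop (𝓝 (H ω))) (k : ℕ) (t B : ℝ)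
    (hB : ∀ v, ‖charFun (P.map (X v)) ((((d + 1) * d ^ k : ℕ) : ℝ)⁻¹ * t)‖ ≤ B) :
    ‖charFun (P.map H) t‖ ≤ B ^ ((d + 1) * d ^ k) := by
  have hrep := fun m => funext (sphAvg_eq hd X m)
  have hmeas : ∀ m, Measurable (sphAvg d X (m + 1)) := by
    intro m
    rw [hrep]
    fun_prop
  have hlim : Tendsto (fun m => charFun (P.map (sphAvg d X (m + 1))) t) atTop
      (𝓝 (charFun (P.map H) t)) := by
    rw [charFun_map_apply_real hHmeas, funext fun m => charFun_map_apply_real (hmeas m) t]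
    refine tendsto_integral_of_dominated_convergence (fun _ => (1 : ℝ))
      (fun m => by have := hmeas m; fun_prop) (integrable_const _)
      (fun m => ae_of_all _ fun ω => ?_) ?_
    · rw [← Complex.ofReal_mul, Complex.norm_exp_ofReal_mul_I]
    · filter_upwards [hH] with ω hω
      have h1 := (tendsto_add_atTop_iff_nat 1).2 hω
      have h2 : Continuous fun x : ℝ => Complex.exp (t * x * Complex.I) := by fun_prop
      exact (h2.tendsto _).comp h1
  refine le_of_tendsto hlim.norm ?_
  filter_upwards [eventually_ge_atTop k] with m hm
  have hindep' : iIndepFun (fun v ω => (((d + 1) * d ^ v.2.length : ℕ) : ℝ)⁻¹ * X v ω) P :=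
    hindep.comp (fun v x => (((d + 1) * d ^ v.2.length : ℕ) : ℝ)⁻¹ * x) (fun v => by fun_prop)
  rw [hrep, iIndepFun.charFun_map_fun_finsetSum_eq_prod (fun v _ => by fun_prop)
    (hindep'.restrict _), Finset.prod_apply, norm_prod]
  have hprob : ∀ v, IsProbabilityMeasure
      (P.map fun ω => (((d + 1) * d ^ v.2.length : ℕ) : ℝ)⁻¹ * X v ω) :=
    fun v => Measure.isProbabilityMeasure_map (by fun_prop)
  have hsub : sphereW d (k + 1) ⊆ (range (m + 1)).biUnion (fun k => sphereW d (k + 1)) :=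
    subset_biUnion_of_mem (fun k => sphereW d (k + 1)) (mem_range.2 (by omega))
  rw [← prod_sdiff hsub]
  refine (mul_le_of_le_one_left (prod_nonneg fun _ _ => norm_nonneg _)
    (prod_le_one (fun _ _ => norm_nonneg _) fun v _ => ?_)).trans ?_
  · have := hprob v
    exact norm_charFun_le_one _
  · rw [← card_sphereW]
    rw [← prod_const]
    refine prod_le_prod (fun _ _ => norm_nonneg _) fun v hv => ?_
    rw [charFun_map_mul_comp (hX v).aemeasurable, vertex_length_of_mem hv]
    exact hB v

lemma exists_pos_of_tsum_sq_pos {p : ℤ → ℝ} (hp0 : ∀ j, 0 ≤ p j)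
    (hmompos : 0 < ∑' j : ℤ, (j : ℝ) ^ 2 * p j) : ∃ j : ℤ, j ≠ 0 ∧ 0 < p j := by
  by_contra! h
  refine hmompos.ne' ((tsum_congr fun j => ?_).trans tsum_zero)
  rcases eq_or_ne j 0 with rfl | hj
  · simp
  · simp [le_antisymm (h j hj) (hp0 j)]

lemma abs_cos_le_cos_of_mem {x y : ℝ} (hy : 0 ≤ y) (hx : y ≤ |x|) (hx1 : |x| ≤ 1) :
    |Real.cos x| ≤ Real.cos y := by
  have hpi := Real.pi_gt_three
  rw [← Real.cos_abs x, abs_of_nonneg (Real.cos_nonneg_of_mem_Icc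
    ⟨by linarith [abs_nonneg x], by linarith⟩)]
  exact Real.cos_le_cos_of_nonneg_of_le_pi hy (by linarith) hx

lemma exists_exp_decay_charFun {Ω : Type*} [MeasurableSpace Ω] (P : Measure Ω)
    [IsProbabilityMeasure P] {d : ℕ} (hd : 2 ≤ d)
    {p : ℤ → ℝ} (hp0 : ∀ j, 0 ≤ p j) (hpsum : Summable p) (hp1 : ∑' j, p j = 1)
    (hsymm : ∀ j, p (-j) = p j) (hmompos : 0 < ∑' j : ℤ, (j : ℝ) ^ 2 * p j)
    {Y : Vertex d → Ω → ℤ} (hmeas : ∀ v, Measurable (Y v)) (hindep : iIndepFun Y P)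
    (hlaw : ∀ v (j : ℤ), P {ω | Y v ω = j} = ENNReal.ofReal (p j))
    {H : Ω → ℝ} (hHmeas : Measurable H)
    (hH : ∀ᵐ ω ∂P,
      Tendsto (fun r => sphAvg d (fun v ω => (Y v ω : ℝ)) r ω) atTop (𝓝 (H ω))) :
    ∃ C c : ℝ, 0 < c ∧ ∀ t, ‖charFun (P.map H) t‖ ≤ C * Real.exp (-(c * |t|)) := by
  obtain ⟨j₀, hj₀, hpj⟩ := exists_pos_of_tsum_sq_pos hp0 hmompos
  have hd1 : (1 : ℝ) < d := by exact_mod_cast hd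
  have hJ : (0 : ℝ) < |(j₀ : ℝ)| := by positivity
  set J : ℝ := |(j₀ : ℝ)| with hJdef
  have hcos : Real.cos (d : ℝ)⁻¹ < 1 := by
    rw [← Real.cos_zero]
    exact Real.cos_lt_cos_of_nonneg_of_le_pi le_rfl
      ((inv_le_one_of_one_le₀ hd1.le).trans (by linarith [Real.pi_gt_three])) (by positivity)
  set δ : ℝ := p j₀ * (1 - Real.cos (d : ℝ)⁻¹) with hδdef
  have hδ : 0 < δ := mul_pos hpj (by linarith)
  have : IsProbabilityMeasure (P.map H) := Measure.isProbabilityMeasure_map hHmeas.aemeasurable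
  refine ⟨Real.exp (δ * (d + 1)), δ * J, by positivity, fun t => ?_⟩
  rw [← Real.exp_add]
  rcases lt_or_ge (J * |t| / (d + 1)) 1 with ht | ht
  · refine (norm_charFun_le_one t).trans (Real.one_le_exp ?_)
    rw [div_lt_one (by positivity)] at ht
    nlinarith
  · obtain ⟨m, hm1, hm2⟩ := exists_nat_pow_near ht hd1
    rw [le_div_iff₀ (by positivity)] at hm1
    rw [div_lt_iff₀ (by positivity)] at hm2
    have hn : (0 : ℝ) < ((d + 1) * d ^ (m + 1) : ℕ) := by positivity
    have hncast : (((d + 1) * d ^ (m + 1) : ℕ) : ℝ) = (d + 1) * d ^ (m + 1) := by push_cast; ring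
    set n : ℕ := (d + 1) * d ^ (m + 1) with hndef
    have habs : |(n : ℝ)⁻¹ * t * j₀| = J * |t| / n := by
      rw [abs_mul, abs_mul, abs_of_pos (inv_pos.2 hn)]
      field_simp
      simp [hJdef]
    have hB : ∀ v, ‖charFun (P.map fun ω => (Y v ω : ℝ)) ((n : ℝ)⁻¹ * t)‖ ≤ Real.exp (-δ) := by
      intro v
      have h1 := norm_charFun_le_of_symm P hp0 hpsum hp1 hsymm (hmeas v) (hlaw v) j₀
        ((n : ℝ)⁻¹ * t)
      have h2 : |Real.cos ((n : ℝ)⁻¹ * t * j₀)| ≤ Real.cos (d : ℝ)⁻¹ := by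
        refine abs_cos_le_cos_of_mem (by positivity) ?_ ?_
        · rw [habs, le_div_iff₀ hn, hncast, inv_mul_le_iff₀ (by positivity), pow_succ]
          nlinarith
        · rw [habs, div_le_one hn, hncast]
          linarith
      have h3 : p j₀ * (1 - Real.cos (d : ℝ)⁻¹) ≤
          p j₀ * (1 - |Real.cos ((n : ℝ)⁻¹ * t * j₀)|) := by gcongr
      have h4 := Real.add_one_le_exp (-δ)
      linarith
    have hmain := norm_charFun_limit_le P hd (X := fun v ω => (Y v ω : ℝ))
      (fun v => by have := hmeas v; fun_prop)
      (hindep.comp (fun _ (j : ℤ) => (j : ℝ)) (fun _ => by fun_prop)) hHmeas hH (m + 1) t _ hB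
    refine hmain.trans ?_
    rw [← Real.exp_nat_mul, Real.exp_le_exp]
    change (n : ℝ) * -δ ≤ _
    have : J * |t| ≤ n := by rw [hncast]; linarith
    nlinarith

/-- The law of the a.s. limit `H` of the spherical averages of the free
height field is absolutely continuous with a bounded `C^∞` Lebesgue density given by
Fourier inversion of the characteristic function of `H`. -/
theorem free_limit_smooth_density
    {Ω : Type} [MeasurableSpace Ω] (P : Measure Ω) [IsProbabilityMeasure P]
    (d : ℕ) (hd : 2 ≤ d)
    (p : ℤ → ℝ) (hp0 : ∀ j, 0 ≤ p j) (hpsum : Summable p) (hp1 : ∑' j, p j = 1)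
    (hsymm : ∀ j, p (-j) = p j)
    (hmom : Summable (fun j : ℤ => (j : ℝ) ^ 2 * p j))
    (hmompos : 0 < ∑' j : ℤ, (j : ℝ) ^ 2 * p j)
    (Y : Vertex d → Ω → ℤ) (hmeas : ∀ v, Measurable (Y v))
    (hindep : iIndepFun Y P)
    (hlaw : ∀ v (j : ℤ), P {ω | Y v ω = j} = ENNReal.ofReal (p j))
    (H : Ω → ℝ) (hHmeas : Measurable H)
    (hH : ∀ᵐ ω ∂P, Tendsto (fun r => sphAvg d (fun v ω => (Y v ω : ℝ)) r ω) atTop (𝓝 (H ω))) :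
    ∃ f : ℝ → ℝ,
      ContDiff ℝ (⊤ : ℕ∞) f ∧
      (∃ M : ℝ, ∀ x, |f x| ≤ M) ∧
      (Measure.map H P) ≪ (volume : Measure ℝ) ∧
      (Measure.map H P) = volume.withDensity (fun x => ENNReal.ofReal (f x)) ∧
      ∀ x : ℝ, (f x : ℂ) =
        (((2 * Real.pi)⁻¹ : ℝ) : ℂ) *
          ∫ t : ℝ, Complex.exp (-(Complex.I * t * x)) *
            ∫ ω, Complex.exp (Complex.I * t * (H ω : ℝ)) ∂P := by
  obtain ⟨C, c, hc, hbd⟩ := exists_exp_decay_charFun P hd hp0 hpsum hp1 hsymm hmompos hmeas hindep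
    hlaw hHmeas hH
  have : IsProbabilityMeasure (P.map H) := Measure.isProbabilityMeasure_map hHmeas.aemeasurable
  have h := integrable_pow_mul_norm_charFun hc hbd
  have hφ : Integrable (charFun (P.map H)) := by
    rw [← integrable_norm_iff measurable_charFun.aestronglyMeasurable]
    simpa using h 0
  have hμ := eq_withDensity_invDensity h hφ
  refine ⟨fun x => (invDensity (P.map H) x).re,
    Complex.reCLM.contDiff.comp (contDiff_invDensity h),
    ⟨_, fun x => (Complex.abs_re_le_norm _).trans (norm_invDensity_le _ x)⟩,
    hμ ▸ withDensity_absolutelyContinuous _ _, hμ, fun x => ?_⟩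
  rw [ofReal_re_invDensity, invDensity_eq]
  simp only [charFun_map_apply_real hHmeas]
  simp only [mul_comm, mul_left_comm]
end
end

section
/- Let d ≥ 2 and let p be a probability mass function on ℤ with p(j) = p(−j) > 0 for every j ∈ ℤ and Σ_{j∈ℤ} j² p(j) < ∞. Let H be the almost-sure limit of the spherical averages H_r of the free height field with increment law p on the rooted Cayley tree of order d, and let f_H be the continuous density of the law of H obtained by Fourier inversion of its characteristic function. Then for every r₁ ≥ 1 there exists a nonempty open interval I ⊆ ℝ such that f_H( x + k/|W_{r₁}| ) > 0 for all x ∈ I and all k ∈ ℤ; consequently the topological support of the law of H is all of ℝ. -/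
open MeasureTheory ProbabilityTheory Filter Finset Topology

noncomputable section

theorem tendsto_inv_mul_withDensity_real_Ioc {h : ℝ → ℝ} (hc : Continuous h) (y : ℝ) :
    Tendsto (fun ε => ε⁻¹ * (volume.withDensity (fun x => ENNReal.ofReal (h x))).real
      (Set.Ioc y (y + ε))) (𝓝[>] 0) (𝓝 (max (h y) 0)) := by
  have hm : Continuous fun x => max (h x) 0 := hc.max continuous_const
  have hd : HasDerivAt (fun u => ∫ x in y..u, max (h x) 0) (max (h y) 0) y :=
    hm.deriv_integral _ _ _ ▸
      (intervalIntegral.differentiable_integral_of_continuous hm y).hasDerivAt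
  refine hd.tendsto_slope_zero_right.congr' ?_
  filter_upwards [self_mem_nhdsWithin] with ε hε
  have hε : 0 < ε := hε
  rw [intervalIntegral.integral_same, sub_zero, smul_eq_mul,
    intervalIntegral.integral_of_le (by linarith), Measure.real,
    withDensity_apply _ measurableSet_Ioc,
    integral_eq_lintegral_of_nonneg_ae (f := fun x => max (h x) 0)
      (Eventually.of_forall fun x => le_max_right _ _)
      hm.aestronglyMeasurable]
  simp

theorem withDensity_real_Ioc_le {h : ℝ → ℝ} {C : ℝ} (hC : ∀ x, h x ≤ C) (hC0 : 0 ≤ C)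
    (y : ℝ) {ε : ℝ} (hε : 0 ≤ ε) :
    (volume.withDensity (fun x => ENNReal.ofReal (h x))).real (Set.Ioc y (y + ε)) ≤ C * ε := by
  rw [Measure.real, withDensity_apply _ measurableSet_Ioc]
  refine ENNReal.toReal_le_of_le_ofReal (by positivity) ?_
  calc _ ≤ ∫⁻ x in Set.Ioc y (y + ε), ENNReal.ofReal C :=
        lintegral_mono fun x => ENNReal.ofReal_le_ofReal (hC x)
    _ = _ := by simp [ENNReal.ofReal_mul hC0]

/-- If a law with a bounded continuous density is a mixture, with strictly positive weights, of
the translates of a finite measure by `a ℤ`, then the positivity set of the density is invariant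
under these translations. -/
theorem density_pos_add_int_mul {h : ℝ → ℝ} (hc : Continuous h) {C : ℝ} (hC : ∀ x, h x ≤ C)
    {p : ℤ → ℝ} (hp0 : ∀ j, 0 < p j) (hps : Summable p) {a : ℝ} {ν : Measure ℝ}
    [IsFiniteMeasure ν]
    (hν : ∀ y ε, HasSum (fun j : ℤ => p j * ν.real (Set.Ioc (y - j * a) (y - j * a + ε)))
      ((volume.withDensity (fun x => ENNReal.ofReal (h x))).real (Set.Ioc y (y + ε))))
    {x : ℝ} (hx : 0 < h x) (k : ℤ) : 0 < h (x + k * a) := by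
  by_contra hk
  push Not at hk
  set μ := volume.withDensity (fun x => ENNReal.ofReal (h x)) with hμ
  have hC0 : 0 ≤ C := hx.le.trans (hC x)
  have key (y ε : ℝ) (j : ℤ) : p j * ν.real (Set.Ioc (y - j * a) (y - j * a + ε)) ≤
      μ.real (Set.Ioc y (y + ε)) :=
    le_hasSum (hν y ε) j fun i _ => mul_nonneg (hp0 i).le measureReal_nonneg
  have hlim (j : ℤ) : Tendsto (fun ε => ε⁻¹ *
      (p j * ν.real (Set.Ioc (x - j * a) (x - j * a + ε)))) (𝓝[>] 0) (𝓝 0) := by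
    have h0 := (tendsto_inv_mul_withDensity_real_Ioc hc (x + k * a)).const_mul (p j * (p (k + j))⁻¹)
    rw [max_eq_right hk, mul_zero] at h0
    refine squeeze_zero' ?_ ?_ h0
    · filter_upwards [self_mem_nhdsWithin] with ε hε
      exact mul_nonneg (inv_nonneg.2 (le_of_lt hε)) (mul_nonneg (hp0 j).le measureReal_nonneg)
    · filter_upwards [self_mem_nhdsWithin] with ε hε
      have hε : 0 < ε := hε
      have h1 := key (x + k * a) ε (k + j)
      have h2 : x + k * a - ((k + j : ℤ) : ℝ) * a = x - j * a := by push_cast; ring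
      rw [h2, ← le_inv_mul_iff₀ (hp0 _)] at h1
      calc _ ≤ ε⁻¹ * (p j * ((p (k + j))⁻¹ * μ.real (Set.Ioc (x + k * a) (x + k * a + ε)))) := by
            have := (hp0 j).le
            gcongr
        _ = _ := by ring
  have hdom := tendsto_tsum_of_dominated_convergence (𝓕 := 𝓝[>] (0 : ℝ))
    (bound := fun j => p j * ((p 0)⁻¹ * C)) (hps.mul_right _) hlim (by
      filter_upwards [self_mem_nhdsWithin] with ε hε j
      have hε : 0 < ε := hε
      have h1 := (key (x - j * a) ε 0).trans (withDensity_real_Ioc_le hC hC0 _ hε.le)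
      rw [Int.cast_zero, zero_mul, sub_zero, ← le_inv_mul_iff₀ (hp0 _)] at h1
      rw [Real.norm_of_nonneg (mul_nonneg (inv_nonneg.2 hε.le)
        (mul_nonneg (hp0 j).le measureReal_nonneg))]
      calc _ ≤ ε⁻¹ * (p j * ((p 0)⁻¹ * (C * ε))) := by
            have := (hp0 j).le
            gcongr
        _ = _ := by field_simp)
  simp_rw [tsum_mul_left, (hν _ _).tsum_eq, tsum_zero] at hdom
  have := tendsto_nhds_unique hdom (tendsto_inv_mul_withDensity_real_Ioc hc x)
  rw [max_eq_left hx.le] at this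
  exact hx.ne this

theorem hasSum_map_add_int_mul_real_Ioc {Ω : Type*} [MeasurableSpace Ω] {P : Measure Ω}
    [IsProbabilityMeasure P] {X : Ω → ℤ} {Z : Ω → ℝ} (hX : Measurable X) (hZ : Measurable Z) (hXZ : IndepFun X Z P)
    (a y ε : ℝ) :
    HasSum (fun j : ℤ => P.real {ω | X ω = j} *
        (P.map Z).real (Set.Ioc (y - j * a) (y - j * a + ε)))
      ((P.map fun ω => Z ω + X ω * a).real (Set.Ioc y (y + ε))) := by
  have hXR : Measurable fun ω => (X ω : ℝ) := measurable_from_top.comp hX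
  have hm : Measurable fun ω => Z ω + X ω * a := hZ.add (hXR.mul_const a)
  have hpre : (fun ω => Z ω + X ω * a) ⁻¹' Set.Ioc y (y + ε) =
      ⋃ j : ℤ, X ⁻¹' {j} ∩ Z ⁻¹' Set.Ioc (y - j * a) (y - j * a + ε) := by
    ext ω
    simp only [Set.mem_preimage, Set.mem_Ioc, Set.mem_iUnion, Set.mem_inter_iff,
      Set.mem_singleton_iff, exists_eq_left']
    constructor <;> rintro ⟨h1, h2⟩ <;> constructor <;> linarith
  have hdisj : Pairwise (Function.onFun Disjoint fun j : ℤ =>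
      X ⁻¹' {j} ∩ Z ⁻¹' Set.Ioc (y - j * a) (y - j * a + ε)) := by
    intro i j hij
    refine Set.disjoint_left.2 fun ω hi hj => hij ?_
    exact (hi.1 : X ω = i).symm.trans hj.1
  have hms (j : ℤ) : MeasurableSet (X ⁻¹' {j} ∩ Z ⁻¹' Set.Ioc (y - j * a) (y - j * a + ε)) :=
    (hX (measurableSet_singleton j)).inter (hZ measurableSet_Ioc)
  rw [map_measureReal_apply hm measurableSet_Ioc, hpre]
  have hterm (j : ℤ) : P.real {ω | X ω = j} *
      (P.map Z).real (Set.Ioc (y - j * a) (y - j * a + ε)) =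
      (P (X ⁻¹' {j} ∩ Z ⁻¹' Set.Ioc (y - j * a) (y - j * a + ε))).toReal := by
    rw [hXZ.measure_inter_preimage_eq_mul _ _ (measurableSet_singleton j) measurableSet_Ioc,
      ENNReal.toReal_mul, map_measureReal_apply hZ measurableSet_Ioc]
    rfl
  simp_rw [hterm]
  rw [Measure.real, measure_iUnion hdisj hms,
    ENNReal.tsum_toReal_eq fun j => measure_ne_top _ _]
  refine ENNReal.hasSum_toReal ?_
  rw [← measure_iUnion hdisj hms]
  exact measure_ne_top _ _

/-- A function that is not identically zero and is given by Fourier inversion is continuous and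
bounded above: integrability of `φ` is automatic, as the integral would vanish otherwise. -/
theorem continuous_and_bounded_of_fourier_inversion {φ : ℝ → ℂ} {f : ℝ → ℝ} {c : ℂ}
    (hf : ∀ x : ℝ, (f x : ℂ) = c * ∫ t : ℝ, Complex.exp (-(Complex.I * t * x)) * φ t)
    (hne : ∃ x, f x ≠ 0) :
    Continuous f ∧ ∃ C, ∀ x, f x ≤ C := by
  have hn (t x : ℝ) : ‖Complex.exp (-(Complex.I * t * x))‖ = 1 := by
    rw [Complex.norm_exp]; simp
  have hexp (x : ℝ) : Continuous fun t : ℝ => Complex.exp (-(Complex.I * t * x)) := by fun_prop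
  constructor
  · obtain ⟨x₀, hx₀⟩ := hne
    have hint : Integrable fun t : ℝ => Complex.exp (-(Complex.I * t * x₀)) * φ t := by
      by_contra hi
      have := hf x₀
      rw [integral_undef hi, mul_zero] at this
      exact hx₀ (by exact_mod_cast this)
    have hφ : Integrable φ := by
      have := hint.bdd_mul (c := 1) (hexp (-x₀)).aestronglyMeasurable
        (Eventually.of_forall fun t => (hn t (-x₀)).le)
      refine this.congr (Eventually.of_forall fun t => ?_)
      simp only
      rw [← mul_assoc, ← Complex.exp_add]
      simp
    have hfc : Continuous fun x : ℝ => (f x : ℂ) := by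
      simp_rw [hf]
      refine continuous_const.mul (continuous_of_dominated (bound := fun t => ‖φ t‖)
        ?_ ?_ hφ.norm ?_)
      · intro x
        exact (hexp x).aestronglyMeasurable.mul hφ.aestronglyMeasurable
      · intro x
        refine Eventually.of_forall fun t => ?_
        rw [norm_mul, hn, one_mul]
      · refine Eventually.of_forall fun t => ?_
        fun_prop
    exact Complex.continuous_re.comp hfc
  · refine ⟨‖c‖ * ∫ t, ‖φ t‖, fun x => ?_⟩
    calc f x ≤ ‖(f x : ℂ)‖ := by simpa using le_abs_self (f x)
      _ ≤ _ := by
        rw [hf, norm_mul]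
        gcongr
        refine (norm_integral_le_integral_norm _).trans_eq ?_
        simp [hn]

theorem sum_sphereW_s10 {d r : ℕ} (F : Vertex d → ℝ) :
    ∑ w ∈ sphereW d r, F w =
      ∑ i : Fin (d + 1), ∑ g : Fin (r - 1) → Fin d, F (i, List.ofFn g) := by
  rw [sphereW, Finset.sum_image, Fintype.sum_prod_type]
  rintro ⟨i, g⟩ - ⟨j, h⟩ - hgh
  simp only [Prod.mk.injEq] at hgh
  rw [hgh.1, List.ofFn_injective hgh.2]

theorem mem_sphereW {d r : ℕ} (hr : 1 ≤ r) (w : Vertex d) :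
    w ∈ sphereW d r ↔ vdepth w = r := by
  obtain ⟨i, l⟩ := w
  simp only [sphereW, Finset.mem_image, Finset.mem_univ, true_and, vdepth, Prod.mk.injEq]
  constructor
  · rintro ⟨⟨j, g⟩, -, rfl⟩
    simp
    omega
  · intro h
    obtain rfl : r = l.length + 1 := h.symm
    exact ⟨(i, l.get), rfl, List.ofFn_get l⟩

theorem heightAt_concat {d : ℕ} {Ω : Type*} (Y : Vertex d → Ω → ℝ) (i : Fin (d + 1))
    (l : List (Fin d)) (c : Fin d) (ω : Ω) :
    heightAt Y (i, l ++ [c]) ω = heightAt Y (i, l) ω + Y (i, l ++ [c]) ω := by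
  simp only [heightAt, List.length_append, List.length_singleton]
  rw [Finset.sum_range_succ]
  congr 1
  · refine Finset.sum_congr rfl fun k hk => ?_
    rw [List.take_append_of_le_length (by simpa [Nat.lt_succ_iff] using hk)]
  · rw [List.take_of_length_le (by simp)]

/-- Passing from depth `r` to depth `r + 1` adds the average of the new increments. -/
theorem sphAvg_succ {d : ℕ} (hd : d ≠ 0) {Ω : Type*} (Y : Vertex d → Ω → ℝ) {r : ℕ}
    (hr : 1 ≤ r) (ω : Ω) :
    sphAvg d Y (r + 1) ω = sphAvg d Y r ω +
      (((d + 1) * d ^ r : ℕ) : ℝ)⁻¹ * ∑ w ∈ sphereW d (r + 1), Y w ω := by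
  obtain ⟨n, rfl⟩ : ∃ n, r = n + 1 := ⟨r - 1, by omega⟩
  have hsnoc (F : Vertex d → ℝ) (i : Fin (d + 1)) :
      ∑ g : Fin (n + 1) → Fin d, F (i, List.ofFn g) =
        ∑ g : Fin n → Fin d, ∑ c : Fin d, F (i, List.ofFn g ++ [c]) := by
    rw [← (Fin.snocEquiv fun _ => Fin d).sum_comp, Fintype.sum_prod_type, Finset.sum_comm]
    refine Finset.sum_congr rfl fun g _ => Finset.sum_congr rfl fun c _ => ?_
    rw [List.ofFn_succ_last]
    simp [Fin.snocEquiv]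
  have hstep (F : Vertex d → ℝ) : ∑ w ∈ sphereW d (n + 1 + 1), F w =
      ∑ w ∈ sphereW d (n + 1), ∑ c : Fin d, F (w.1, w.2 ++ [c]) := by
    rw [sum_sphereW_s10, sum_sphereW_s10]
    exact Finset.sum_congr rfl fun i _ => hsnoc F i
  have hd' : (d : ℝ) ≠ 0 := by exact_mod_cast hd
  have hsum : ∑ w ∈ sphereW d (n + 1 + 1), heightAt Y w ω =
      d * ∑ w ∈ sphereW d (n + 1), heightAt Y w ω + ∑ w ∈ sphereW d (n + 1 + 1), Y w ω := by
    rw [hstep, hstep, Finset.mul_sum, ← Finset.sum_add_distrib]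
    refine Finset.sum_congr rfl fun w _ => ?_
    simp only [heightAt_concat, Finset.sum_add_distrib, Finset.sum_const, Finset.card_univ,
      Fintype.card_fin, nsmul_eq_mul]
  simp only [sphAvg, hsum, Nat.add_sub_cancel]
  push_cast
  have : (d : ℝ) + 1 ≠ 0 := by positivity
  field_simp
  ring

theorem heightAt_eq_update_add {d : ℕ} {Ω : Type*} (Y : Vertex d → Ω → ℝ) {v w : Vertex d}
    (hvw : vdepth v = vdepth w) (ω : Ω) :
    heightAt Y w ω = heightAt (Function.update Y v 0) w ω + if w = v then Y v ω else 0 := by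
  simp only [heightAt]
  rw [Finset.sum_range_succ, Finset.sum_range_succ, add_assoc]
  simp only [vdepth, Nat.add_right_cancel_iff] at hvw
  congr 1
  · refine Finset.sum_congr rfl fun k hk => ?_
    rw [Function.update_of_ne]
    rintro rfl
    simp at hvw hk
    omega
  · rw [List.take_length]
    by_cases h : w = v
    · subst h
      simp
    · simp [h]

/-- A single increment at depth `s` enters every later spherical average with weight
`1 / |W_s|`. -/
theorem sphAvg_eq_update_add {d : ℕ} (hd : d ≠ 0) {Ω : Type*} (Y : Vertex d → Ω → ℝ)
    {v : Vertex d} {s r : ℕ} (hs : vdepth v = s) (hr : s ≤ r) (ω : Ω) :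
    sphAvg d Y r ω = sphAvg d (Function.update Y v 0) r ω +
      Y v ω * (((d + 1) * d ^ (s - 1) : ℕ) : ℝ)⁻¹ := by
  have hs1 : 1 ≤ s := by rw [← hs, vdepth]; omega
  induction r, hr using Nat.le_induction with
  | base =>
    have hsum : ∑ w ∈ sphereW d s, heightAt Y w ω =
        ∑ w ∈ sphereW d s, heightAt (Function.update Y v 0) w ω + Y v ω := by
      rw [Finset.sum_congr rfl fun w hw => heightAt_eq_update_add Y
        (hs.trans ((mem_sphereW hs1 w).1 hw).symm) ω, Finset.sum_add_distrib,
        Finset.sum_ite_eq', if_pos ((mem_sphereW hs1 v).2 hs)]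
    rw [sphAvg, hsum, sphAvg]
    ring
  | succ r hr ih =>
    rw [sphAvg_succ hd _ (hs1.trans hr), sphAvg_succ hd _ (hs1.trans hr), ih]
    have : ∑ w ∈ sphereW d (r + 1), Function.update Y v 0 w ω =
        ∑ w ∈ sphereW d (r + 1), Y w ω := by
      refine Finset.sum_congr rfl fun w hw => ?_
      rw [Function.update_of_ne]
      rintro rfl
      have := (mem_sphereW (by omega) w).1 hw
      omega
    rw [this]
    ring

theorem measurable_sphAvg {d : ℕ} {Ω : Type*} {m : MeasurableSpace Ω} {Y : Vertex d → Ω → ℝ}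
    (hY : ∀ v, Measurable (Y v)) (r : ℕ) : Measurable (sphAvg d Y r) := by
  unfold sphAvg heightAt
  fun_prop

/-- The limit of the spherical averages splits into one weighted increment and an independent
remainder. -/
theorem exists_indepFun_decomposition {d : ℕ} (hd : d ≠ 0) {Ω : Type*} {mΩ : MeasurableSpace Ω}
    {P : Measure Ω} {Y : Vertex d → Ω → ℤ} (hmeas : ∀ v, Measurable (Y v))
    (hindep : iIndepFun Y P) {H : Ω → ℝ}
    (hH : ∀ᵐ ω ∂P, Tendsto (fun r => sphAvg d (fun v ω => (Y v ω : ℝ)) r ω) atTop (𝓝 (H ω)))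
    (v : Vertex d) :
    ∃ Z : Ω → ℝ, Measurable Z ∧ IndepFun (Y v) Z P ∧
      H =ᵐ[P] fun ω => Z ω + Y v ω * (((d + 1) * d ^ (vdepth v - 1) : ℕ) : ℝ)⁻¹ := by
  set Y' : Vertex d → Ω → ℝ := Function.update (fun v ω => (Y v ω : ℝ)) v 0 with hY'
  have hle (u : Vertex d) : MeasurableSpace.comap (Y u) inferInstance ≤ mΩ :=
    (hmeas u).comap_le
  let m : MeasurableSpace Ω := ⨆ u ∈ ({v}ᶜ : Set (Vertex d)),
    MeasurableSpace.comap (Y u) inferInstance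
  have hYm (u : Vertex d) : Measurable[m] (Y' u) := by
    by_cases h : u = v
    · subst h
      rw [hY', Function.update_self]
      exact measurable_const
    · rw [hY', Function.update_of_ne h]
      have hum : MeasurableSpace.comap (Y u) inferInstance ≤ m :=
        le_iSup₂_of_le (f := fun u (_ : u ∈ ({v}ᶜ : Set (Vertex d))) =>
          MeasurableSpace.comap (Y u) inferInstance) u h le_rfl
      exact measurable_from_top.comp ((comap_measurable (Y u)).mono hum le_rfl)
  have hZm : Measurable[m] fun ω => limsup (fun r => sphAvg d Y' r ω) atTop :=
    Measurable.limsup fun r => measurable_sphAvg hYm r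
  refine ⟨_, hZm.mono (iSup₂_le fun u _ => hle u) le_rfl, ?_, ?_⟩
  · have hI := indep_iSup_of_disjoint hle hindep.iIndep (S := {v}) (T := {v}ᶜ) disjoint_compl_right
    rw [IndepFun_iff_Indep]
    refine indep_of_indep_of_le_right (indep_of_indep_of_le_left hI ?_) hZm.comap_le
    simp only [Set.mem_singleton_iff, iSup_iSup_eq_left]
    exact le_rfl
  · filter_upwards [hH] with ω hω
    set c := (Y v ω : ℝ) * (((d + 1) * d ^ (vdepth v - 1) : ℕ) : ℝ)⁻¹
    have hlim : Tendsto (fun r => sphAvg d Y' r ω) atTop (𝓝 (H ω - c)) := by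
      refine (hω.sub_const c).congr' ?_
      filter_upwards [eventually_ge_atTop (vdepth v)] with r hr
      rw [sphAvg_eq_update_add hd _ rfl hr]
      simp only [c, hY']
      ring
    rw [hlim.limsup_eq]
    ring

/-- If moreover `p > 0` everywhere, the Fourier-inversion density `f` of the
a.s. limit `H` is, for every `r₁ ≥ 1`, strictly positive on `I + ℤ/|W_{r₁}|` for some nonempty
open interval `I`; consequently the law of `H` has full topological support. -/
theorem free_limit_density_full_support
    {Ω : Type} [MeasurableSpace Ω] (P : Measure Ω) [IsProbabilityMeasure P]
    (d : ℕ) (hd : 2 ≤ d)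
    (p : ℤ → ℝ) (hp0 : ∀ j, 0 < p j) (hpsum : Summable p) (hp1 : ∑' j, p j = 1)
    (hsymm : ∀ j, p (-j) = p j)
    (hmom : Summable (fun j : ℤ => (j : ℝ) ^ 2 * p j))
    (Y : Vertex d → Ω → ℤ) (hmeas : ∀ v, Measurable (Y v))
    (hindep : iIndepFun Y P)
    (hlaw : ∀ v (j : ℤ), P {ω | Y v ω = j} = ENNReal.ofReal (p j))
    (H : Ω → ℝ) (hHmeas : Measurable H)
    (hH : ∀ᵐ ω ∂P, Tendsto (fun r => sphAvg d (fun v ω => (Y v ω : ℝ)) r ω) atTop (𝓝 (H ω)))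
    (f : ℝ → ℝ)
    (hf : ∀ x : ℝ, (f x : ℂ) =
      (((2 * Real.pi)⁻¹ : ℝ) : ℂ) *
        ∫ t : ℝ, Complex.exp (-(Complex.I * t * x)) *
          ∫ ω, Complex.exp (Complex.I * t * (H ω : ℝ)) ∂P)
    (hfdens : Measure.map H P = volume.withDensity (fun x => ENNReal.ofReal (f x))) :
    (∀ r₁ : ℕ, 1 ≤ r₁ → ∃ a b : ℝ, a < b ∧
      ∀ x ∈ Set.Ioo a b, ∀ k : ℤ,
        0 < f (x + (k : ℝ) / (((d : ℝ) + 1) * (d : ℝ) ^ (r₁ - 1)))) ∧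
    ∀ U : Set ℝ, IsOpen U → U.Nonempty → 0 < Measure.map H P U := by
  have hd0 : d ≠ 0 := by omega
  have hprob : IsProbabilityMeasure (P.map H) :=
    Measure.isProbabilityMeasure_map hHmeas.aemeasurable
  have hpos : ∃ x, 0 < f x := by
    by_contra! h
    have hzero : P.map H = 0 := by
      rw [hfdens]
      simp [ENNReal.ofReal_of_nonpos (h _)]
    exact IsProbabilityMeasure.ne_zero (P.map H) hzero
  obtain ⟨hcont, C, hC⟩ := continuous_and_bounded_of_fourier_inversion hf
    (hpos.imp fun x hx => hx.ne')
  have hshift (r₁ : ℕ) (hr₁ : 1 ≤ r₁) (x : ℝ) (hx : 0 < f x) (k : ℤ) :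
      0 < f (x + (k : ℝ) / (((d : ℝ) + 1) * (d : ℝ) ^ (r₁ - 1))) := by
    let v : Vertex d := (0, List.replicate (r₁ - 1) ⟨0, by omega⟩)
    have hv : vdepth v - 1 = r₁ - 1 := by simp [v, vdepth]
    obtain ⟨Z, hZ, hYZ, hHZ⟩ := exists_indepFun_decomposition hd0 hmeas hindep hH v
    have hpr (j : ℤ) : P.real {ω | Y v ω = j} = p j := by
      rw [Measure.real, hlaw, ENNReal.toReal_ofReal (hp0 j).le]
    have := Measure.isProbabilityMeasure_map (μ := P) hZ.aemeasurable
    have hres := density_pos_add_int_mul hcont hC hp0 hpsum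
      (a := (((d + 1) * d ^ (vdepth v - 1) : ℕ) : ℝ)⁻¹) (ν := P.map Z) (fun y ε => by
        have h := hasSum_map_add_int_mul_real_Ioc (hmeas v) hZ hYZ
          (((d + 1) * d ^ (vdepth v - 1) : ℕ) : ℝ)⁻¹ y ε
        rw [← Measure.map_congr hHZ, hfdens] at h
        simpa only [hpr] using h) hx k
    rw [hv] at hres
    simpa [div_eq_mul_inv] using hres
  obtain ⟨x₀, hx₀⟩ := hpos
  have hopen : IsOpen {x | 0 < f x} := isOpen_lt continuous_const hcont
  refine ⟨fun r₁ hr₁ => ?_, fun U hU hUne => ?_⟩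
  · obtain ⟨a, b, hab, hsub⟩ := mem_nhds_iff_exists_Ioo_subset.1 (hopen.mem_nhds hx₀)
    exact ⟨a, b, hab.1.trans hab.2, fun x hx k => hshift r₁ hr₁ x (hsub hx) k⟩
  · obtain ⟨u, hu⟩ := hUne
    obtain ⟨δ, hδ, hball⟩ := Metric.isOpen_iff.1 hU u hu
    obtain ⟨n, hn⟩ := pow_unbounded_of_one_lt δ⁻¹ (show (1 : ℝ) < d by exact_mod_cast hd)
    set N : ℝ := ((d : ℝ) + 1) * (d : ℝ) ^ n with hN
    have hNδ : δ⁻¹ < N := by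
      have : (0 : ℝ) ≤ d * (d : ℝ) ^ n := by positivity
      rw [hN]
      linarith
    have hN0 : 0 < N := (inv_pos.2 hδ).trans hNδ
    let k : ℤ := ⌊(u - x₀) * N⌋
    have hk : 0 < f (x₀ + k / N) := hshift (n + 1) (by omega) x₀ hx₀ k
    have hkU : x₀ + k / N ∈ U := by
      apply hball
      rw [Metric.mem_ball, dist_comm, Real.dist_eq]
      have h1 : u - (x₀ + k / N) = Int.fract ((u - x₀) * N) / N := by
        rw [Int.fract, sub_div, mul_div_cancel_right₀ _ hN0.ne']
        simp only [k]
        ring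
      rw [h1, abs_of_nonneg (div_nonneg (Int.fract_nonneg _) hN0.le), div_lt_iff₀ hN0]
      calc _ < 1 := Int.fract_lt_one _
        _ = δ * δ⁻¹ := (mul_inv_cancel₀ hδ.ne').symm
        _ < δ * N := by gcongr
    rw [pos_iff_ne_zero, hfdens, Ne, withDensity_apply_eq_zero hcont.measurable.ennreal_ofReal]
    have hset : {x | ENNReal.ofReal (f x) ≠ 0} ∩ U = {x | 0 < f x} ∩ U := by
      ext x
      simp
    rw [hset]
    exact (hopen.inter hU).measure_ne_zero _ ⟨_, hk, hkU⟩
end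
end
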